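/- Let A be a finite-dimensional left Leibniz algebra over a field F of characteristic zero and let B be a subinvariant subalgebra of A. Then rad(B) = B ∩ rad(A) and nilrad(B) = B ∩ nilrad(A). -/

import Mathlib

open Submodule

section LeibnizDefs

variable {F : Type*} {A : Type*} [Field F] [AddCommGroup A] [Module F A]

/-- The span of all products `b*c` with `b ∈ B`, `c ∈ C`. -/
def mulSub (mul : A →ₗ[F] A →ₗ[F] A) (B C : Submodule F A) : Submodule F A :=
  Submodule.span F {z : A | ∃ b ∈ B, ∃ c ∈ C, mul b c = z}

/-- `fSub mul B C = B·C + C·B`, the function `f(B,C)`. -/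
def fSub (mul : A →ₗ[F] A →ₗ[F] A) (B C : Submodule F A) : Submodule F A :=
  mulSub mul B C ⊔ mulSub mul C B

/-- `fIter mul B C n = f^{n+1}(B,C)` (so index `0` is `f^1(B,C) = f(B,C)`). -/
def fIter (mul : A →ₗ[F] A →ₗ[F] A) (B C : Submodule F A) : ℕ → Submodule F A
  | 0 => fSub mul B C
  | n + 1 => fSub mul B (fIter mul B C n)

/-- `lcs mul B n = B^{n+1}`, the lower central series (index `0` is `B^1 = B`). -/
def lcs (mul : A →ₗ[F] A →ₗ[F] A) (B : Submodule F A) : ℕ → Submodule F A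
  | 0 => B
  | n + 1 => mulSub mul B (lcs mul B n)

/-- `ds mul B n = B^{(n+1)}`, the derived series (index `0` is `B^{(1)} = B`). -/
def ds (mul : A →ₗ[F] A →ₗ[F] A) (B : Submodule F A) : ℕ → Submodule F A
  | 0 => B
  | n + 1 => mulSub mul (ds mul B n) (ds mul B n)

/-- `B^ω = ⋂_{i ≥ 1} B^i`. -/
def omegaSub (mul : A →ₗ[F] A →ₗ[F] A) (B : Submodule F A) : Submodule F A :=
  ⨅ n, lcs mul B n

/-- `B` is a subalgebra: a subspace closed under multiplication. -/
def IsSubalg (mul : A →ₗ[F] A →ₗ[F] A) (B : Submodule F A) : Prop :=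
  ∀ x ∈ B, ∀ y ∈ B, mul x y ∈ B

/-- `I` is an ideal of the subalgebra `S`: `I ⊆ S` and `xI + Ix ⊆ I` for all `x ∈ S`. -/
def IsIdealIn (mul : A →ₗ[F] A →ₗ[F] A) (I S : Submodule F A) : Prop :=
  I ≤ S ∧ ∀ x ∈ S, ∀ y ∈ I, mul x y ∈ I ∧ mul y x ∈ I

/-- `B` is subinvariant in `S`: there is a chain of subalgebras
`B = c 0 ⊆ c 1 ⊆ ⋯ ⊆ c t = S` with each term an ideal of the next. -/
def IsSubinvariantIn (mul : A →ₗ[F] A →ₗ[F] A) (B S : Submodule F A) : Prop :=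
  ∃ (t : ℕ) (c : ℕ → Submodule F A), c 0 = B ∧ c t = S ∧
    (∀ i ≤ t, IsSubalg mul (c i)) ∧ ∀ i < t, IsIdealIn mul (c i) (c (i + 1))

/-- `B` is nilpotent: `B^m = 0` for some `m`. -/
def IsNilpotentSub (mul : A →ₗ[F] A →ₗ[F] A) (B : Submodule F A) : Prop :=
  ∃ m, lcs mul B m = ⊥

/-- `B` is solvable: `B^{(m)} = 0` for some `m`. -/
def IsSolvableSub (mul : A →ₗ[F] A →ₗ[F] A) (B : Submodule F A) : Prop :=
  ∃ m, ds mul B m = ⊥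

/-- The centralizer `Z_A(B) = {x : xb = 0 = bx for all b ∈ B}`. -/
def centralizerSet (mul : A →ₗ[F] A →ₗ[F] A) (B : Submodule F A) : Set A :=
  {x : A | ∀ b ∈ B, mul x b = 0 ∧ mul b x = 0}

/-- `R` is the radical (the maximal solvable ideal) of the subalgebra `S`. -/
def IsRadicalIn (mul : A →ₗ[F] A →ₗ[F] A) (S R : Submodule F A) : Prop :=
  IsIdealIn mul R S ∧ IsSolvableSub mul R ∧
    ∀ T, IsIdealIn mul T S → IsSolvableSub mul T → T ≤ R

/-- `N` is the nilradical (the maximal nilpotent ideal) of the subalgebra `S`. -/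
def IsNilradicalIn (mul : A →ₗ[F] A →ₗ[F] A) (S N : Submodule F A) : Prop :=
  IsIdealIn mul N S ∧ IsNilpotentSub mul N ∧
    ∀ T, IsIdealIn mul T S → IsNilpotentSub mul T → T ≤ N

/-- `H` is a Cartan subalgebra: a nilpotent self-normalizing subalgebra. -/
def IsCartan (mul : A →ₗ[F] A →ₗ[F] A) (H : Submodule F A) : Prop :=
  IsSubalg mul H ∧ IsNilpotentSub mul H ∧
    ∀ x : A, (∀ h ∈ H, mul x h ∈ H ∧ mul h x ∈ H) → x ∈ H

/-- The subalgebra generated by a set: the smallest subalgebra containing it. -/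
def subalgGen (mul : A →ₗ[F] A →ₗ[F] A) (s : Set A) : Submodule F A :=
  sInf {S : Submodule F A | IsSubalg mul S ∧ s ⊆ (S : Set A)}

end LeibnizDefs

/-!
Left multiplication by `x` is a derivation of a left Leibniz algebra. If `W` is a solvable ideal
of any nonassociative algebra with derivation `D`, then in characteristic zero `W + D W` is again
solvable: for `u, v` in the `k`-th derived term of `W`, all summands of the Leibniz expansion of
`D ^ (2 * 2 ^ k) (u v)` other than the middle one lie in `W`. For a subspace of an associative
algebra solvability under multiplication is nilpotency, so the same fact, applied to an ideal of
the associative algebra generated by left multiplications, yields the nilpotent case; here an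
ideal `T` of `B` is nilpotent if and only if the span of its left multiplications on all of `A`
is, because products of enough of these map `A` into `T` when `B` is subinvariant. Hence a maximal
solvable (nilpotent) ideal of a member of the chain is invariant under left multiplication by the
next member; it is also invariant on the right, because `x y + y x` lies in the left annihilator,
which it absorbs.
-/

section Derivation

variable {K M : Type*} [CommSemiring K] [AddCommMonoid M] [Module K M]

/-- `D` is a derivation of the (not necessarily associative) product `b`. -/
def IsDerivationOf (b : M →ₗ[K] M →ₗ[K] M) (D : M →ₗ[K] M) : Prop :=
  ∀ x y, D (b x y) = b (D x) y + b x (D y)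

theorem IsDerivationOf.pow_apply {b : M →ₗ[K] M →ₗ[K] M} {D : M →ₗ[K] M}
    (hD : IsDerivationOf b D) (n : ℕ) (x y : M) :
    (D ^ n) (b x y) = ∑ ij ∈ Finset.HasAntidiagonal.antidiagonal n,
      n.choose ij.1 • b ((D ^ ij.1) x) ((D ^ ij.2) y) := by
  induction n with
  | zero => simp
  | succ n ih =>
    rw [Finset.sum_antidiagonal_choose_succ_nsmul
      (M := M) (fun i j => b ((D ^ i) x) ((D ^ j) y)) n]
    simp only [pow_succ', Module.End.mul_apply, ih, map_sum, map_nsmul, hD _ _, nsmul_add,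
      Finset.sum_add_distrib]
    rw [add_comm]
    congr 1
    refine Finset.sum_congr rfl fun ij hij => ?_
    rw [Nat.choose_symm_of_eq_add (Finset.HasAntidiagonal.mem_antidiagonal.1 hij).symm]

end Derivation

section Solvable

variable {F E : Type*} [Field F] [AddCommGroup E] [Module F E] {b : E →ₗ[F] E →ₗ[F] E}
  {B C I S U V W : Submodule F E}

theorem mulSub_eq_map₂ (b : E →ₗ[F] E →ₗ[F] E) (B C : Submodule F E) :
    mulSub b B C = map₂ b B C :=
  (map₂_eq_span_image2 b B C).symm

theorem mulSub_le : mulSub b B C ≤ S ↔ ∀ x ∈ B, ∀ y ∈ C, b x y ∈ S := by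
  rw [mulSub_eq_map₂, map₂_le]

theorem mul_mem_mulSub {x y : E} (hx : x ∈ B) (hy : y ∈ C) : b x y ∈ mulSub b B C :=
  mulSub_le.1 le_rfl x hx y hy

theorem IsIdealIn.isSubalg (hI : IsIdealIn b I S) : IsSubalg b I :=
  fun x hx y hy => (hI.2 x (hI.1 hx) y hy).1

theorem IsIdealIn.inf (hI : IsIdealIn b I S) (hB : IsSubalg b B) (hBS : B ≤ S) :
    IsIdealIn b (B ⊓ I) B := by
  refine ⟨inf_le_left, fun x hx y hy => ?_⟩
  obtain ⟨hxy, hyx⟩ := hI.2 x (hBS hx) y hy.2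
  exact ⟨⟨hB x hx y hy.1, hxy⟩, ⟨hB y hy.1 x hx, hyx⟩⟩

theorem IsIdealIn.sup (hB : IsIdealIn b B S) (hC : IsIdealIn b C S) : IsIdealIn b (B ⊔ C) S := by
  refine ⟨sup_le hB.1 hC.1, fun x hx z hz => ?_⟩
  obtain ⟨y, hy, y', hy', rfl⟩ := mem_sup.1 hz
  rw [map_add, map_add, LinearMap.add_apply]
  exact ⟨add_mem_sup (hB.2 x hx y hy).1 (hC.2 x hx y' hy').1,
    add_mem_sup (hB.2 x hx y hy).2 (hC.2 x hx y' hy').2⟩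

theorem ds_mono (h : B ≤ C) (n : ℕ) : ds b B n ≤ ds b C n := by
  induction n with
  | zero => exact h
  | succ n ih => exact mulSub_le.2 fun x hx y hy => mul_mem_mulSub (ih hx) (ih hy)

theorem ds_add (b : E →ₗ[F] E →ₗ[F] E) (B : Submodule F E) (m n : ℕ) :
    ds b B (m + n) = ds b (ds b B m) n := by
  induction n with
  | zero => rfl
  | succ n ih => exact congrArg (fun C => mulSub b C C) ih

theorem IsSubalg.ds_le (hB : IsSubalg b B) (n : ℕ) : ds b B n ≤ B := by
  induction n with
  | zero => exact le_rfl
  | succ n ih => exact mulSub_le.2 fun x hx y hy => hB x (ih hx) y (ih hy)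

theorem IsSolvableSub.of_ds_le (hC : IsSolvableSub b C) {m : ℕ} (h : ds b B m ≤ C) :
    IsSolvableSub b B := by
  obtain ⟨n, hn⟩ := hC
  exact ⟨m + n, by rw [ds_add, eq_bot_iff, ← hn]; exact ds_mono h n⟩

theorem IsSolvableSub.mono (hC : IsSolvableSub b C) (h : B ≤ C) : IsSolvableSub b B :=
  hC.of_ds_le (m := 0) h

theorem ds_sup_le (hB : IsSubalg b B) (hBS : B ≤ S) (hI : IsIdealIn b I S) (n : ℕ) :
    ds b (B ⊔ I) n ≤ ds b B n ⊔ I := by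
  induction n with
  | zero => exact le_rfl
  | succ n ih =>
    refine mulSub_le.2 fun x hx y hy => ?_
    obtain ⟨u, hu, i, hi, rfl⟩ := mem_sup.1 (ih hx)
    obtain ⟨v, hv, j, hj, rfl⟩ := mem_sup.1 (ih hy)
    rw [map_add b, LinearMap.add_apply, map_add (b u), add_assoc]
    have hvjS : v + j ∈ S := add_mem (hBS (hB.ds_le n hv)) (hI.1 hj)
    exact add_mem_sup (mul_mem_mulSub hu hv)
      (add_mem (hI.2 u (hBS (hB.ds_le n hu)) j hj).1 (hI.2 _ hvjS i hi).2)

theorem IsSolvableSub.sup (hB : IsSubalg b B) (hBS : B ≤ S) (hI : IsIdealIn b I S)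
    (hBsolv : IsSolvableSub b B) (hIsolv : IsSolvableSub b I) : IsSolvableSub b (B ⊔ I) := by
  obtain ⟨m, hm⟩ := hBsolv
  exact hIsolv.of_ds_le (m := m) ((ds_sup_le hB hBS hI m).trans (by rw [hm, bot_sup_eq]))

variable {D : E →ₗ[F] E}

theorem pow_apply_mem_of_mem_ds (hD : IsDerivationOf b D) (hW : IsIdealIn b W V)
    (hDV : ∀ v ∈ V, D v ∈ V) {k j : ℕ} (hj : j < 2 ^ k) {u : E} (hu : u ∈ ds b W k) :
    (D ^ j) u ∈ W := by
  induction k generalizing j u with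
  | zero =>
    obtain rfl : j = 0 := by simpa using hj
    exact hu
  | succ k ih =>
    have hV : ∀ i, ∀ x ∈ ds b W k, (D ^ i) x ∈ V := fun i x hx =>
      Module.End.pow_apply_mem_of_forall_mem i hDV x (hW.1 (hW.isSubalg.ds_le k hx))
    suffices h : ds b W (k + 1) ≤ W.comap (D ^ j) from h hu
    refine mulSub_le.2 fun x hx y hy => ?_
    rw [mem_comap, hD.pow_apply]
    refine sum_mem fun p hp => nsmul_mem ?_ _
    rw [Finset.HasAntidiagonal.mem_antidiagonal] at hp
    rcases lt_or_ge p.1 (2 ^ k) with hlt | hge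
    · exact (hW.2 _ (hV _ y hy) _ (ih hlt hx)).2
    · exact (hW.2 _ (hV _ x hx) _ (ih (by omega) hy)).1

theorem centralBinom_smul_sub_pow_apply_mem (hD : IsDerivationOf b D) (hW : IsIdealIn b W V)
    (hDV : ∀ v ∈ V, D v ∈ V) {n : ℕ} {u u' : E} (huV : u ∈ V) (hu'V : u' ∈ V)
    (hu : ∀ j < n, (D ^ j) u ∈ W) (hu' : ∀ j < n, (D ^ j) u' ∈ W) :
    n.centralBinom • b ((D ^ n) u) ((D ^ n) u') - (D ^ (2 * n)) (b u u') ∈ W := by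
  have hmid : (n, n) ∈ Finset.HasAntidiagonal.antidiagonal (2 * n) := by
    rw [Finset.HasAntidiagonal.mem_antidiagonal, two_mul]
  rw [hD.pow_apply, ← Finset.add_sum_erase _ _ hmid, Nat.centralBinom_eq_two_mul_choose,
    sub_add_cancel_left]
  refine neg_mem (sum_mem fun p hp => nsmul_mem ?_ _)
  rw [Finset.mem_erase, Finset.HasAntidiagonal.mem_antidiagonal, Ne, Prod.ext_iff] at hp
  have hV := Module.End.pow_apply_mem_of_forall_mem (f' := D) (p := V)
  rcases lt_or_ge p.1 n with hlt | hge
  · exact (hW.2 _ (hV p.2 hDV u' hu'V) _ (hu _ hlt)).2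
  · exact (hW.2 _ (hV p.1 hDV u huV) _ (hu' _ (by omega))).1

theorem ds_sup_map_le [CharZero F] (hD : IsDerivationOf b D) (hW : IsIdealIn b W V)
    (hDV : ∀ v ∈ V, D v ∈ V) (k : ℕ) :
    ds b (W ⊔ W.map D) k ≤ W ⊔ (ds b W k).map (D ^ 2 ^ k) := by
  induction k with
  | zero => simp [ds]
  | succ k ih =>
    refine mulSub_le.2 fun x hx y hy => ?_
    obtain ⟨w, hw, _, ⟨u, hu, rfl⟩, rfl⟩ := mem_sup.1 (ih hx)
    obtain ⟨w', hw', _, ⟨u', hu', rfl⟩, rfl⟩ := mem_sup.1 (ih hy)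
    have hdsV : ds b W k ≤ V := (hW.isSubalg.ds_le k).trans hW.1
    have hpowV : ∀ v ∈ ds b W k, (D ^ 2 ^ k) v ∈ V := fun v hv =>
      Module.End.pow_apply_mem_of_forall_mem _ hDV v (hdsV hv)
    have hmiddle : b ((D ^ 2 ^ k) u) ((D ^ 2 ^ k) u') ∈
        W ⊔ (ds b W (k + 1)).map (D ^ 2 ^ (k + 1)) := by
      have hcongr := centralBinom_smul_sub_pow_apply_mem hD hW hDV (hdsV hu) (hdsV hu')
        (fun j hj => pow_apply_mem_of_mem_ds hD hW hDV hj hu)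
        (fun j hj => pow_apply_mem_of_mem_ds hD hW hDV hj hu')
      have hbinom : ((2 ^ k).centralBinom : F) ≠ 0 :=
        Nat.cast_ne_zero.2 (Nat.centralBinom_ne_zero _)
      rw [← smul_mem_iff _ hbinom, Nat.cast_smul_eq_nsmul,
        ← sub_add_cancel (_ • _) ((D ^ (2 * 2 ^ k)) (b u u')), pow_succ' 2 k]
      exact add_mem_sup hcongr (mem_map_of_mem (mul_mem_mulSub hu hu'))
    rw [map_add b, LinearMap.add_apply, map_add (b ((D ^ 2 ^ k) u))]
    refine add_mem (mem_sup_left ?_) (add_mem (mem_sup_left ?_) hmiddle)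
    · exact (hW.2 _ (add_mem (hW.1 hw') (hpowV u' hu')) w hw).2
    · exact (hW.2 _ (hpowV u hu) w' hw').1

theorem IsSolvableSub.sup_map [CharZero F] (hD : IsDerivationOf b D) (hW : IsIdealIn b W V)
    (hDV : ∀ v ∈ V, D v ∈ V) (hsolv : IsSolvableSub b W) : IsSolvableSub b (W ⊔ W.map D) := by
  obtain ⟨m, hm⟩ := hsolv
  refine IsSolvableSub.of_ds_le ⟨m, hm⟩ (m := m) ((ds_sup_map_le hD hW hDV m).trans ?_)
  rw [hm, Submodule.map_bot, sup_bot_eq]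

end Solvable

section OrderedMonoid

variable {α : Type*} [Monoid α] [Preorder α] [MulLeftMono α] [MulRightMono α] {u w : α}

theorem mul_pow_le_pow_mul (h : u * w ≤ w * u) (k : ℕ) : u * w ^ k ≤ w ^ k * u := by
  induction k with
  | zero => simp
  | succ k ih =>
    calc u * w ^ (k + 1) = u * w ^ k * w := by rw [pow_succ, mul_assoc]
      _ ≤ w ^ k * u * w := by gcongr
      _ = w ^ k * (u * w) := mul_assoc ..
      _ ≤ w ^ k * (w * u) := by gcongr
      _ = w ^ (k + 1) * u := by rw [pow_succ, mul_assoc]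

theorem mul_pow_le_pow_mul_of_mul_self_le (h : u * w ≤ w * u) (h_one : 1 ≤ u)
    (h_self : u * u ≤ u) (k : ℕ) : (w * u) ^ k ≤ w ^ k * u := by
  induction k with
  | zero => simpa using h_one
  | succ k ih =>
    calc (w * u) ^ (k + 1) = w * u * (w * u) ^ k := pow_succ' ..
      _ ≤ w * u * (w ^ k * u) := by gcongr
      _ = w * (u * w ^ k) * u := by simp only [mul_assoc]
      _ ≤ w * (w ^ k * u) * u := by
        gcongr ?_ * u
        exact mul_le_mul_right (mul_pow_le_pow_mul h k) w
      _ = w ^ (k + 1) * (u * u) := by simp only [pow_succ', mul_assoc]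
      _ ≤ w ^ (k + 1) * u := by gcongr

end OrderedMonoid

section Adjoin

attribute [local instance] LieRing.ofAssociativeRing

variable {K R : Type*} [CommRing K] [Ring R] [Algebra K R]

theorem isDerivationOf_ad (x : R) :
    IsDerivationOf (LinearMap.mul K R) (LieAlgebra.ad K R x) := fun y z => by
  simp only [LinearMap.mul_apply', LieAlgebra.ad_apply, Ring.lie_def]
  noncomm_ring

theorem IsDerivationOf.apply_mem_adjoin {D : R →ₗ[K] R}
    (hD : IsDerivationOf (LinearMap.mul K R) D) {s : Set R}
    (hs : ∀ v ∈ s, D v ∈ Algebra.adjoin K s) {u : R} (hu : u ∈ Algebra.adjoin K s) :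
    D u ∈ Algebra.adjoin K s := by
  induction hu using Algebra.adjoin_induction with
  | mem v hv => exact hs v hv
  | algebraMap r =>
    have hD1 : D 1 = 0 := by simpa using hD 1 1
    rw [Algebra.algebraMap_eq_smul_one, map_smul, hD1, smul_zero]
    exact zero_mem _
  | add x y _ _ hx hy => rw [map_add]; exact add_mem hx hy
  | mul x y hxU hyU hx hy =>
    have hxy : D (x * y) = D x * y + x * D y := hD x y
    rw [hxy]
    exact add_mem (mul_mem hx hyU) (mul_mem hxU hy)

theorem adjoin_mul_le_mul_adjoin {s : Set R} {W : Submodule K R}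
    (h : ∀ v ∈ s, ∀ w ∈ W, ⁅v, w⁆ ∈ W) :
    Subalgebra.toSubmodule (Algebra.adjoin K s) * W ≤
      W * Subalgebra.toSubmodule (Algebra.adjoin K s) := by
  refine Submodule.mul_le.2 fun u hu => ?_
  rw [Subalgebra.mem_toSubmodule] at hu
  induction hu using Algebra.adjoin_induction with
  | mem v hv =>
    intro w hw
    have hswap : v * w = ⁅v, w⁆ * 1 + w * v := by rw [Ring.lie_def]; noncomm_ring
    rw [hswap]
    exact add_mem (mul_mem_mul (h v hv w hw) (one_mem (Algebra.adjoin K s)))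
      (mul_mem_mul hw (Algebra.subset_adjoin hv))
  | algebraMap r =>
    intro w hw
    rw [Algebra.commutes]
    exact mul_mem_mul hw (algebraMap_mem (Algebra.adjoin K s) r)
  | add x y _ _ hx hy =>
    intro w hw
    rw [add_mul]
    exact add_mem (hx w hw) (hy w hw)
  | mul x y _ _ hx hy =>
    intro w hw
    rw [mul_assoc]
    refine Submodule.mul_induction_on (hy w hw) (fun w' hw' a ha => ?_) fun p q hp hq => ?_
    · rw [← mul_assoc, ← (Algebra.adjoin K s).isIdempotentElem_toSubmodule.eq, ← mul_assoc]
      exact mul_mem_mul (hx w' hw') ha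
    · rw [mul_add]
      exact add_mem hp hq

end Adjoin

section AssociativeNilpotent

attribute [local instance] LieRing.ofAssociativeRing

variable {F R : Type*} [Field F] [Ring R] [Algebra F R] {V W : Submodule F R}

theorem ds_mul_eq_pow (W : Submodule F R) (n : ℕ) :
    ds (LinearMap.mul F R) W n = W ^ 2 ^ n := by
  induction n with
  | zero => rw [pow_zero, pow_one]; rfl
  | succ n ih => rw [ds, ih, mulSub_eq_map₂, ← Submodule.mul_eq_map₂, ← pow_add, pow_succ, mul_two]

theorem isSolvableSub_mul_iff : IsSolvableSub (LinearMap.mul F R) W ↔ IsNilpotent W := by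
  simp only [IsSolvableSub, ds_mul_eq_pow, ← Submodule.zero_eq_bot]
  exact ⟨fun ⟨n, hn⟩ => ⟨2 ^ n, hn⟩,
    fun ⟨n, hn⟩ => ⟨n, pow_eq_zero_of_le Nat.lt_two_pow_self.le hn⟩⟩

theorem isIdealIn_mul_adjoin {s : Set R} (hWs : W ≤ Subalgebra.toSubmodule (Algebra.adjoin F s))
    (h : ∀ v ∈ s, ∀ w ∈ W, ⁅v, w⁆ ∈ W) :
    IsIdealIn (LinearMap.mul F R) (W * Subalgebra.toSubmodule (Algebra.adjoin F s))
      (Subalgebra.toSubmodule (Algebra.adjoin F s)) := by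
  set U := Subalgebra.toSubmodule (Algebra.adjoin F s)
  have hUU : U * U = U := (Algebra.adjoin F s).isIdempotentElem_toSubmodule
  have hleft : U * (W * U) ≤ W * U :=
    calc U * (W * U) = U * W * U := (mul_assoc ..).symm
      _ ≤ W * U * U := mul_le_mul_left (adjoin_mul_le_mul_adjoin h) U
      _ = W * U := by rw [mul_assoc, hUU]
  have hright : W * U * U ≤ W * U := by rw [mul_assoc, hUU]
  exact ⟨(mul_le_mul_left hWs U).trans hUU.le,
    fun x hx y hy => ⟨hleft (mul_mem_mul hx hy), hright (mul_mem_mul hy hx)⟩⟩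

theorem isNilpotent_mul_adjoin {s : Set R} (h : ∀ v ∈ s, ∀ w ∈ W, ⁅v, w⁆ ∈ W)
    (hW : IsNilpotent W) :
    IsNilpotent (W * Subalgebra.toSubmodule (Algebra.adjoin F s)) := by
  obtain ⟨m, hm⟩ := hW
  refine ⟨m, le_bot_iff.1 ((mul_pow_le_pow_mul_of_mul_self_le (adjoin_mul_le_mul_adjoin h)
    (Submodule.one_le.2 (one_mem (Algebra.adjoin F s)))
    (Algebra.adjoin F s).isIdempotentElem_toSubmodule.le m).trans ?_)⟩
  rw [hm, zero_mul, Submodule.zero_eq_bot]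

theorem isNilpotent_sup_map [CharZero F] {D : R →ₗ[F] R}
    (hD : IsDerivationOf (LinearMap.mul F R) D) (hWV : W ≤ V)
    (hVW : ∀ v ∈ V, ∀ w ∈ W, ⁅v, w⁆ ∈ W) (hDV : ∀ v ∈ V, D v ∈ V) (hW : IsNilpotent W) :
    IsNilpotent (W ⊔ W.map D) := by
  set U := Subalgebra.toSubmodule (Algebra.adjoin F (V : Set R))
  have hVU : V ≤ U := Algebra.subset_adjoin
  have hDU : ∀ u ∈ U, D u ∈ U := fun u hu => hD.apply_mem_adjoin (fun v hv => hVU (hDV v hv)) hu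
  have hideal : IsIdealIn (LinearMap.mul F R) (W * U) U := isIdealIn_mul_adjoin (hWV.trans hVU) hVW
  have hsolv : IsSolvableSub (LinearMap.mul F R) (W * U ⊔ (W * U).map D) :=
    .sup_map hD hideal hDU (isSolvableSub_mul_iff.2 (isNilpotent_mul_adjoin hVW hW))
  have hWU : W ≤ W * U := fun w hw =>
    mul_one w ▸ mul_mem_mul hw (one_mem (Algebra.adjoin F (V : Set R)))
  exact isSolvableSub_mul_iff.1 (hsolv.mono (sup_le_sup hWU (map_mono hWU)))

end AssociativeNilpotent

section LeftMultiplication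

variable {F A : Type*} [Field F] [AddCommGroup A] [Module F A] {mul : A →ₗ[F] A →ₗ[F] A}
  {B S T W : Submodule F A}

theorem mulSub_eq_map_smul (mul : A →ₗ[F] A →ₗ[F] A) (B C : Submodule F A) :
    mulSub mul B C = B.map mul • C := by
  refine le_antisymm (mulSub_le.2 fun x hx y hy => ?_) (smul_le.2 ?_)
  · exact smul_mem_smul (mem_map_of_mem hx) hy
  · rintro _ ⟨x, hx, rfl⟩ y hy
    exact mul_mem_mulSub hx hy

theorem lcs_eq_pow_smul (mul : A →ₗ[F] A →ₗ[F] A) (B : Submodule F A) (n : ℕ) :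
    lcs mul B n = B.map mul ^ n • B := by
  induction n with
  | zero => rw [pow_zero, Submodule.one_smul]; rfl
  | succ n ih => rw [lcs, ih, mulSub_eq_map_smul, pow_succ', ← smul_eq_mul, Submodule.smul_assoc]

theorem lcs_mono (h : B ≤ S) (n : ℕ) : lcs mul B n ≤ lcs mul S n := by
  induction n with
  | zero => exact h
  | succ n ih => exact mulSub_le.2 fun x hx y hy => mul_mem_mulSub (h hx) (ih hy)

theorem IsNilpotentSub.mono (hS : IsNilpotentSub mul S) (h : B ≤ S) : IsNilpotentSub mul B := by
  obtain ⟨n, hn⟩ := hS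
  exact ⟨n, le_bot_iff.1 (hn ▸ lcs_mono h n)⟩

theorem isNilpotentSub_of_isNilpotent_map (h : IsNilpotent (W.map mul)) :
    IsNilpotentSub mul W := by
  obtain ⟨n, hn⟩ := h
  exact ⟨n, by rw [lcs_eq_pow_smul, hn, Submodule.zero_eq_bot, bot_smul]⟩

theorem IsSubinvariantIn.induction_on {P : Submodule F A → Prop} (hB : IsSubinvariantIn mul B S)
    (base : P B) (step : ∀ V V', IsIdealIn mul V V' → P V → P V') : P S := by
  obtain ⟨t, c, rfl, rfl, -, hc⟩ := hB
  suffices h : ∀ i ≤ t, P (c i) from h t le_rfl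
  intro i
  induction i with
  | zero => exact fun _ => base
  | succ i ih => exact fun hi => step _ _ (hc i hi) (ih (Nat.le_of_succ_le hi))

theorem IsSubinvariantIn.isSubalg (hB : IsSubinvariantIn mul B S) : IsSubalg mul B := by
  obtain ⟨t, c, rfl, -, hsub, -⟩ := hB
  exact hsub 0 t.zero_le

theorem IsSubinvariantIn.exists_pow_smul_le (hB : IsSubinvariantIn mul B S)
    (hT : IsIdealIn mul T B) : ∃ k, T.map mul ^ k • S ≤ T := by
  suffices h : T ≤ S ∧ ∃ k, T.map mul ^ k • S ≤ T from h.2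
  refine hB.induction_on (P := fun V => T ≤ V ∧ ∃ k, T.map mul ^ k • V ≤ T)
    ⟨hT.1, 1, ?_⟩ fun V V' hV ⟨hTV, k, hk⟩ => ⟨hTV.trans hV.1, k + 1, ?_⟩
  · rw [pow_one, ← mulSub_eq_map_smul]
    exact mulSub_le.2 fun x hx y hy => (hT.2 y hy x hx).2
  · have hTV' : T.map mul • V' ≤ V := by
      rw [← mulSub_eq_map_smul]
      exact mulSub_le.2 fun x hx y hy => (hV.2 y hy x (hTV hx)).2
    calc T.map mul ^ (k + 1) • V' = T.map mul ^ k • T.map mul • V' := by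
          rw [pow_succ, ← smul_eq_mul, Submodule.smul_assoc]
      _ ≤ T.map mul ^ k • V := smul_mono le_rfl hTV'
      _ ≤ T := hk

theorem IsSubinvariantIn.isNilpotent_map (hB : IsSubinvariantIn mul B ⊤)
    (hT : IsIdealIn mul T B) (hnil : IsNilpotentSub mul T) : IsNilpotent (T.map mul) := by
  obtain ⟨k, hk⟩ := hB.exists_pow_smul_le hT
  obtain ⟨m, hm⟩ := hnil
  have hbot : T.map mul ^ (m + k) • (⊤ : Submodule F A) ≤ ⊥ :=
    calc T.map mul ^ (m + k) • (⊤ : Submodule F A)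
        = T.map mul ^ m • T.map mul ^ k • (⊤ : Submodule F A) := by
          rw [pow_add, ← smul_eq_mul, Submodule.smul_assoc]
      _ ≤ T.map mul ^ m • T := smul_mono le_rfl hk
      _ = ⊥ := by rw [← lcs_eq_pow_smul, hm]
  refine ⟨m + k, le_bot_iff.1 fun f hf => ?_⟩
  exact LinearMap.ext fun a => hbot (smul_mem_smul hf mem_top)

end LeftMultiplication

section Leibniz

attribute [local instance] LieRing.ofAssociativeRing

variable {F A : Type*} [Field F] [AddCommGroup A] [Module F A] {mul : A →ₗ[F] A →ₗ[F] A}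
  {I T V V' W : Submodule F A}

theorem leftMul_mul (hleib : ∀ x, IsDerivationOf mul (mul x)) (x y : A) :
    mul (mul x y) = ⁅(mul x : Module.End F A), (mul y : Module.End F A)⁆ :=
  LinearMap.ext fun z => eq_sub_of_add_eq (hleib x y z).symm

theorem mul_add_mul_swap_mem_ker (hleib : ∀ x, IsDerivationOf mul (mul x)) (x y : A) :
    mul x y + mul y x ∈ LinearMap.ker mul := by
  rw [LinearMap.mem_ker, map_add, leftMul_mul hleib, leftMul_mul hleib, ← lie_skew, neg_add_cancel]

theorem isIdealIn_inf_ker (hV : IsSubalg mul V) (hleib : ∀ x, IsDerivationOf mul (mul x)) :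
    IsIdealIn mul (V ⊓ LinearMap.ker mul) V := by
  refine ⟨inf_le_left, fun x hx k ⟨hkV, hk⟩ => ?_⟩
  rw [SetLike.mem_coe, LinearMap.mem_ker] at hk
  refine ⟨⟨hV x hx k hkV, ?_⟩, by rw [hk]; exact zero_mem _⟩
  rw [SetLike.mem_coe, LinearMap.mem_ker, leftMul_mul hleib, hk, lie_zero]

theorem isSolvableSub_of_le_ker (h : I ≤ LinearMap.ker mul) : IsSolvableSub mul I := by
  refine ⟨1, le_bot_iff.1 (mulSub_le.2 fun x hx y _ => ?_)⟩
  rw [LinearMap.mem_ker.1 (h hx), LinearMap.zero_apply, mem_bot]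

theorem IsIdealIn.sup_map_leftMul (hleib : ∀ x, IsDerivationOf mul (mul x))
    (hW : IsIdealIn mul W V) (hV : IsIdealIn mul V V') {x : A} (hx : x ∈ V') :
    IsIdealIn mul (W ⊔ W.map (mul x)) V := by
  refine ⟨sup_le hW.1 (map_le_iff_le_comap.2 fun w hw => (hV.2 x hx w (hW.1 hw)).1),
    fun v hv z hz => ?_⟩
  obtain ⟨w, hw, _, ⟨w', hw', rfl⟩, rfl⟩ := mem_sup.1 hz
  obtain ⟨hxv, hvx⟩ := hV.2 x hx v hv
  have hleft : mul v (mul x w') = mul (mul v x) w' + mul x (mul v w') := hleib v x w'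
  have hright : mul (mul x w') v = mul x (mul w' v) - mul w' (mul x v) :=
    eq_sub_of_add_eq (hleib x w' v).symm
  rw [map_add, map_add, LinearMap.add_apply, hleft, hright, sub_eq_neg_add, ← add_assoc,
    ← add_assoc]
  exact ⟨add_mem_sup (add_mem (hW.2 v hv w hw).1 (hW.2 _ hvx w' hw').1)
      (mem_map_of_mem (hW.2 v hv w' hw').1),
    add_mem_sup (add_mem (hW.2 v hv w hw).2 (neg_mem (hW.2 _ hxv w' hw').2))
      (mem_map_of_mem (hW.2 v hv w' hw').2)⟩

/-- A property `Q` of ideals which survives adding the image under a left multiplication and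
adding an ideal contained in the left annihilator. These are the closure properties that let
ideals satisfying `Q` be extended along a subinvariant chain. -/
structure IsRadicalProperty (mul : A →ₗ[F] A →ₗ[F] A) (Q : Submodule F A → Prop) : Prop where
  sup_map_leftMul {W V : Submodule F A} {x : A} (hW : IsIdealIn mul W V)
    (hx : ∀ v ∈ V, mul x v ∈ V) (hQ : Q W) : Q (W ⊔ W.map (mul x))
  sup_of_le_ker {W V I : Submodule F A} (hW : IsIdealIn mul W V) (hI : IsIdealIn mul I V)
    (hker : I ≤ LinearMap.ker mul) (hQ : Q W) : Q (W ⊔ I)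

theorem isRadicalProperty_isSolvableSub [CharZero F]
    (hleib : ∀ x, IsDerivationOf mul (mul x)) :
    IsRadicalProperty mul (IsSolvableSub mul) where
  sup_map_leftMul hW hx hQ := .sup_map (hleib _) hW hx hQ
  sup_of_le_ker hW hI hker hQ := .sup hW.isSubalg hW.1 hI hQ (isSolvableSub_of_le_ker hker)

theorem map_sup_map_leftMul (hleib : ∀ x, IsDerivationOf mul (mul x)) (W : Submodule F A)
    (x : A) : (W ⊔ W.map (mul x)).map mul =
      W.map mul ⊔ (W.map mul).map (LieAlgebra.ad F (Module.End F A) (mul x)) := by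
  rw [Submodule.map_sup, ← Submodule.map_comp, ← Submodule.map_comp]
  congr 2
  exact LinearMap.ext fun y => leftMul_mul hleib x y

theorem isRadicalProperty_isNilpotent_map [CharZero F]
    (hleib : ∀ x, IsDerivationOf mul (mul x)) :
    IsRadicalProperty mul fun W => IsNilpotent (W.map mul) where
  sup_map_leftMul {W V x} hW hx hQ := by
    rw [map_sup_map_leftMul hleib]
    refine isNilpotent_sup_map (V := V.map mul) (isDerivationOf_ad _) (map_mono hW.1) ?_ ?_ hQ
    · rintro _ ⟨v, hv, rfl⟩ _ ⟨w, hw, rfl⟩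
      exact ⟨mul v w, (hW.2 v hv w hw).1, leftMul_mul hleib v w⟩
    · rintro _ ⟨v, hv, rfl⟩
      exact ⟨mul x v, hx v hv, leftMul_mul hleib x v⟩
  sup_of_le_ker _ _ hker hQ := by
    rwa [Submodule.map_sup, LinearMap.le_ker_iff_map.1 hker, sup_bot_eq]

variable [FiniteDimensional F A] {Q : Submodule F A → Prop}

theorem IsRadicalProperty.exists_isIdealIn_of_isIdealIn (hQ : IsRadicalProperty mul Q)
    (hleib : ∀ x, IsDerivationOf mul (mul x)) (hV : IsIdealIn mul V V')
    (hT : IsIdealIn mul T V) (hQT : Q T) : ∃ W, T ≤ W ∧ IsIdealIn mul W V' ∧ Q W := by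
  obtain ⟨W, ⟨hTW, hW, hQW⟩, hmax⟩ := set_has_maximal_iff_noetherian.2 inferInstance
    {W : Submodule F A | T ≤ W ∧ IsIdealIn mul W V ∧ Q W} ⟨T, le_rfl, hT, hQT⟩
  have habsorb : ∀ X, IsIdealIn mul (W ⊔ X) V → Q (W ⊔ X) → X ≤ W := fun X hX hQX =>
    sup_eq_left.1 (eq_of_le_of_not_lt le_sup_left
      (hmax _ ⟨hTW.trans le_sup_left, hX, hQX⟩)).symm
  have hker : V ⊓ LinearMap.ker mul ≤ W :=
    have hideal := isIdealIn_inf_ker hV.isSubalg hleib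
    habsorb _ (hW.sup hideal) (hQ.sup_of_le_ker hW hideal inf_le_right hQW)
  have hleft : ∀ x ∈ V', W.map (mul x) ≤ W := fun x hx =>
    habsorb _ (hW.sup_map_leftMul hleib hV hx)
      (hQ.sup_map_leftMul hW (fun v hv => (hV.2 x hx v hv).1) hQW)
  refine ⟨W, hTW, ⟨hW.1.trans hV.1, fun x hx w hw => ?_⟩, hQW⟩
  obtain ⟨hxw, hwx⟩ := hV.2 x hx w (hW.1 hw)
  have hxwW : mul x w ∈ W := hleft x hx (mem_map_of_mem hw)
  exact ⟨hxwW, (add_mem_cancel_left hxwW).1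
    (hker ⟨add_mem hxw hwx, mul_add_mul_swap_mem_ker hleib x w⟩)⟩

theorem IsRadicalProperty.exists_isIdealIn_of_isSubinvariantIn (hQ : IsRadicalProperty mul Q)
    (hleib : ∀ x, IsDerivationOf mul (mul x)) {B S : Submodule F A}
    (hB : IsSubinvariantIn mul B S) (hT : IsIdealIn mul T B) (hQT : Q T) :
    ∃ W, T ≤ W ∧ IsIdealIn mul W S ∧ Q W := by
  refine hB.induction_on (P := fun V => ∃ W, T ≤ W ∧ IsIdealIn mul W V ∧ Q W)
    ⟨T, le_rfl, hT, hQT⟩ fun V V' hV ⟨W, hTW, hW, hQW⟩ => ?_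
  obtain ⟨W', hWW', hW', hQW'⟩ := hQ.exists_isIdealIn_of_isIdealIn hleib hV hW hQW
  exact ⟨W', hTW.trans hWW', hW', hQW'⟩

end Leibniz

/-- over characteristic zero, for `B` subinvariant in `A`,
`rad(B) = B ∩ rad(A)` and `nilrad(B) = B ∩ nilrad(A)`. -/
theorem stmt_15 {F A : Type*} [Field F] [CharZero F]
    [AddCommGroup A] [Module F A] [FiniteDimensional F A]
    (mul : A →ₗ[F] A →ₗ[F] A)
    (hleib : ∀ x y z : A, mul x (mul y z) = mul (mul x y) z + mul y (mul x z))
    (B R N RB NB : Submodule F A)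
    (hB : IsSubinvariantIn mul B ⊤)
    (hR : IsRadicalIn mul ⊤ R) (hN : IsNilradicalIn mul ⊤ N)
    (hRB : IsRadicalIn mul B RB) (hNB : IsNilradicalIn mul B NB) :
    RB = B ⊓ R ∧ NB = B ⊓ N := by
  have hBsub : IsSubalg mul B := hB.isSubalg
  refine ⟨le_antisymm (le_inf hRB.1.1 ?_) ?_, le_antisymm (le_inf hNB.1.1 ?_) ?_⟩
  · obtain ⟨W, hRBW, hW, hsolv⟩ := (isRadicalProperty_isSolvableSub hleib)
      |>.exists_isIdealIn_of_isSubinvariantIn hleib hB hRB.1 hRB.2.1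
    exact hRBW.trans (hR.2.2 W hW hsolv)
  · exact hRB.2.2 _ (hR.1.inf hBsub le_top) (hR.2.1.mono inf_le_right)
  · obtain ⟨W, hNBW, hW, hnil⟩ := (isRadicalProperty_isNilpotent_map hleib)
      |>.exists_isIdealIn_of_isSubinvariantIn hleib hB hNB.1 (hB.isNilpotent_map hNB.1 hNB.2.1)
    exact hNBW.trans (hN.2.2 W hW (isNilpotentSub_of_isNilpotent_map hnil))
  · exact hNB.2.2 _ (hN.1.inf hBsub le_top) (hN.2.1.mono inf_le_right)
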